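/- Let ρ ∝ exp(−V) be a probability distribution on ℝ^d where V is convex and L-smooth (‖∇²V‖_op ≤ L pointwise). Let ρ_t := ρ ∗ N(0, tI) denote the heat-flow smoothing. Then for every integer q ≥ 2 and every 0 ≤ t < 1/(Lq), the Rényi divergence satisfies R_q(ρ_t ‖ ρ) ≤ (d/(2(q−1))) · log(1/(1 − Lqt)). -/

import Mathlib

open MeasureTheory

noncomputable section

/-- Rényi divergence of order q: `R_q(μ‖ν) = (1/(q−1)) log ∫ (dμ/dν)^q dν`. -/
def renyi {α : Type*} [MeasurableSpace α] (q : ℝ) (μ ν : Measure α) : ℝ :=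
  (1/(q-1)) * Real.log (∫ x, ((μ.rnDeriv ν x).toReal) ^ q ∂ν)

/-- Density of the centered Gaussian N(0, tI) on ℝ^d. -/
def gaussPdf (d : ℕ) (t : ℝ) (x : EuclideanSpace ℝ (Fin d)) : ℝ :=
  (2 * Real.pi * t) ^ (-(d:ℝ)/2) * Real.exp (-‖x‖^2 / (2*t))

/-- The centered Gaussian measure N(0, tI) on ℝ^d. -/
def gaussMeasure (d : ℕ) (t : ℝ) : Measure (EuclideanSpace ℝ (Fin d)) :=
  volume.withDensity fun x => ENNReal.ofReal (gaussPdf d t x)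

/-- Convolution of two measures on ℝ^d. -/
def mconv {d : ℕ} (μ ν : Measure (EuclideanSpace ℝ (Fin d))) :
    Measure (EuclideanSpace ℝ (Fin d)) :=
  (μ.prod ν).map fun p => p.1 + p.2

/-!
Write `f` for the density of `ρ ∝ exp (-V)`. Convexity bounds its translates from above,
`f (x - y) ≤ f x * exp ⟪∇V x, y⟫`, and averaging over `y ∼ N(0, tI)` bounds the density of `ρ_t`
with respect to `ρ` by `exp (t ‖∇V‖² / 2)`. Smoothness bounds the translates from below,
`f (x - u) ≥ f x * exp (⟪∇V x, u⟫ - L ‖u‖² / 2)`; integrating in `x` shows that `∇V` is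
`L`-sub-Gaussian under `ρ`. Since `exp (s ‖g‖² / 2)` is the mean of `exp ⟪g, u⟫` over
`u ∼ N(0, sI)`, Tonelli gives `E_ρ exp (s ‖∇V‖² / 2) ≤ (1 - L s) ^ (-d / 2)`, and `s = q t` is the
claim.
-/

section Calculus

variable {E : Type*} [NormedAddCommGroup E] [NormedSpace ℝ E]

theorem add_fderiv_sub_le_of_convexOn {s : Set E} {f : E → ℝ} {f' : E →L[ℝ] ℝ} {x y : E}
    (hf : ConvexOn ℝ s f) (hx : x ∈ s) (hy : y ∈ s) (hf' : HasFDerivAt f f' x) :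
    f x + f' (y - x) ≤ f y := by
  have hline : HasDerivAt (f ∘ AffineMap.lineMap x y) (f' (y - x)) (0 : ℝ) :=
    hf'.comp_hasDerivAt_of_eq 0 AffineMap.hasDerivAt_lineMap (AffineMap.lineMap_apply_zero x y).symm
  have hslope := (hf.comp_affineMap (AffineMap.lineMap x y)).le_slope_of_hasDerivAt
    (by simpa using hx) (by simpa using hy) one_pos hline
  simp only [slope_def_field, Function.comp_apply, AffineMap.lineMap_apply_one,
    AffineMap.lineMap_apply_zero, sub_zero, div_one] at hslope
  linarith

theorem le_add_fderiv_sub_add_sq_of_lipschitzWith {f : E → ℝ} {K : NNReal}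
    (hf : Differentiable ℝ f) (hf' : LipschitzWith K (fderiv ℝ f)) (x y : E) :
    f y ≤ f x + fderiv ℝ f x (y - x) + K * ‖y - x‖ ^ 2 / 2 := by
  set v := y - x
  have hline (s : ℝ) : HasDerivAt (fun s : ℝ => f (x + s • v)) (fderiv ℝ f (x + s • v) v) s := by
    have : HasDerivAt (fun s : ℝ => x + s • v) v s := by
      simpa using ((hasDerivAt_id s).smul_const v).const_add x
    exact (hf _).hasFDerivAt.comp_hasDerivAt s this
  have hquad (s : ℝ) : HasDerivAt
      (fun s : ℝ => f x + s * fderiv ℝ f x v + s ^ 2 * (K * ‖v‖ ^ 2 / 2))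
      (fderiv ℝ f x v + s * (K * ‖v‖ ^ 2)) s := by
    refine ((((hasDerivAt_id s).mul_const _).const_add _).add
      ((hasDerivAt_pow 2 s).mul_const _)).congr_deriv ?_
    simp only [Nat.cast_ofNat, one_mul, Nat.add_one_sub_one, pow_one]
    ring
  have hderiv_le (s : ℝ) (hs : 0 ≤ s) :
      fderiv ℝ f (x + s • v) v ≤ fderiv ℝ f x v + s * (K * ‖v‖ ^ 2) := by
    have hlip : ‖fderiv ℝ f (x + s • v) - fderiv ℝ f x‖ ≤ K * (s * ‖v‖) := by
      simpa [norm_smul, abs_of_nonneg hs] using hf'.norm_sub_le (x + s • v) x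
    have := (Real.le_norm_self _).trans
      ((fderiv ℝ f (x + s • v) - fderiv ℝ f x).le_of_opNorm_le hlip v)
    rw [sub_apply] at this
    linarith
  have := image_le_of_deriv_right_le_deriv_boundary (a := 0) (b := 1)
    (fun s _ => (hline s).continuousAt.continuousWithinAt)
    (fun s _ => (hline s).hasDerivWithinAt) (by simp)
    (fun s _ => (hquad s).continuousAt.continuousWithinAt)
    (fun s _ => (hquad s).hasDerivWithinAt) (fun s hs => hderiv_le s hs.1)
    (Set.right_mem_Icc.2 zero_le_one)
  simpa [v] using this

end Calculus

section Density

theorem rnDeriv_le_of_le_withDensity {α : Type*} [MeasurableSpace α] {μ ν : Measure α}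
    [SigmaFinite ν] {F : α → ENNReal} (h : μ ≤ ν.withDensity F) : μ.rnDeriv ν ≤ᵐ[ν] F :=
  ae_le_of_forall_setLIntegral_le_of_sigmaFinite (μ.measurable_rnDeriv ν) fun s hs _ =>
    calc ∫⁻ x in s, μ.rnDeriv ν x ∂ν ≤ μ s := Measure.setLIntegral_rnDeriv_le s
      _ ≤ ν.withDensity F s := h s
      _ = ∫⁻ x in s, F x ∂ν := withDensity_apply F hs

theorem renyi_le_of_le_withDensity {α : Type*} [MeasurableSpace α] {μ ν : Measure α}
    [SigmaFinite ν] {q C : ℝ} {F : α → ENNReal} (hq : 1 < q) (hC : 1 ≤ C)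
    (h : μ ≤ ν.withDensity F) (hF : ∫⁻ x, F x ^ q ∂ν ≤ ENNReal.ofReal C) :
    renyi q μ ν ≤ 1 / (q - 1) * Real.log C := by
  set I := ∫ x, (μ.rnDeriv ν x).toReal ^ q ∂ν with hI
  have hq0 : 0 ≤ q := by linarith
  have hI0 : 0 ≤ I := integral_nonneg fun x => by positivity
  have hIC : I ≤ C := by
    rw [hI, integral_eq_lintegral_of_nonneg_ae (.of_forall fun x => by positivity)
      ((μ.measurable_rnDeriv ν).ennreal_toReal.pow_const q).aestronglyMeasurable]
    refine ENNReal.toReal_le_of_le_ofReal (zero_le_one.trans hC) (le_trans ?_ hF)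
    refine lintegral_mono_ae ?_
    filter_upwards [rnDeriv_le_of_le_withDensity h] with x hx
    rw [ENNReal.toReal_rpow]
    exact ENNReal.ofReal_toReal_le.trans (ENNReal.rpow_le_rpow hx hq0)
  have hlog : Real.log I ≤ Real.log C := by
    rcases hI0.eq_or_lt with hI0 | hI0
    · rw [← hI0, Real.log_zero]
      exact Real.log_nonneg hC
    · exact Real.log_le_log hI0 hIC
  exact mul_le_mul_of_nonneg_left hlog (one_div_nonneg.2 (by linarith))

theorem conv_le_withDensity_lintegral {M : Type*} [AddMonoid M] [MeasurableSpace M]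
    [MeasurableAdd₂ M] {μ ν : Measure M} [SFinite μ] [SFinite ν] {k : M → M → ENNReal}
    (hk : Measurable (Function.uncurry k))
    (h : ∀ y, μ.map (· + y) ≤ μ.withDensity fun x => k x y) :
    μ.conv ν ≤ μ.withDensity fun x => ∫⁻ y, k x y ∂ν := by
  refine Measure.le_iff.2 fun s hs => ?_
  calc μ.conv ν s = ∫⁻ y, μ.map (· + y) s ∂ν := by
        rw [Measure.conv, Measure.map_apply measurable_add hs,
          Measure.prod_apply_symm (measurable_add hs)]
        refine lintegral_congr fun y => ?_
        rw [Measure.map_apply (measurable_add_const y) hs]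
        rfl
    _ ≤ ∫⁻ y, ∫⁻ x in s, k x y ∂μ ∂ν := by
        refine lintegral_mono fun y => ?_
        rw [← withDensity_apply _ hs]
        exact h y s
    _ = ∫⁻ x in s, ∫⁻ y, k x y ∂ν ∂μ :=
        lintegral_lintegral_swap (hk.comp measurable_swap).aemeasurable
    _ = μ.withDensity (fun x => ∫⁻ y, k x y ∂ν) s := (withDensity_apply _ hs).symm

end Density

section Tilted

theorem map_add_right_tilted {G : Type*} [AddGroup G] [MeasurableSpace G] [MeasurableAdd G]
    (μ : Measure G) [μ.IsAddRightInvariant] (f : G → ℝ) (u : G) :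
    (μ.tilted f).map (· + u) = μ.tilted fun x => f (x - u) := by
  ext s hs
  have hs' := measurable_add_const u hs
  rw [Measure.map_apply (measurable_add_const u) hs, tilted_apply' _ _ hs, tilted_apply' _ _ hs',
    integral_sub_right_eq_self (fun x => Real.exp (f x)), ← lintegral_indicator hs,
    ← lintegral_indicator hs', ← lintegral_add_right_eq_self (s.indicator _) u]
  simp only [Set.indicator, add_sub_cancel_right]
  rfl

variable {E : Type*} [NormedAddCommGroup E] [NormedSpace ℝ E] [MeasurableSpace E] [BorelSpace E]
  (μ : Measure E) [μ.IsAddRightInvariant] {V : E → ℝ}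

theorem map_add_right_tilted_neg_le_of_convexOn (hV : Differentiable ℝ V)
    (hconv : ConvexOn ℝ Set.univ V) (u : E) :
    (μ.tilted fun x => -V x).map (· + u) ≤
      (μ.tilted fun x => -V x).withDensity fun x => ENNReal.ofReal (Real.exp (fderiv ℝ V x u)) := by
  have hVc := hV.continuous
  have htangent (x : E) : -V (x - u) ≤ -V x + fderiv ℝ V x u := by
    have := add_fderiv_sub_le_of_convexOn hconv (Set.mem_univ x) (Set.mem_univ (x - u))
      (hV x).hasFDerivAt
    rw [sub_sub_cancel_left, map_neg] at this
    linarith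
  rw [map_add_right_tilted, Measure.tilted, Measure.tilted,
    integral_sub_right_eq_self (fun x => Real.exp (-V x)),
    ← withDensity_mul _ (by fun_prop) (measurable_fderiv_apply_const ℝ V u).exp.ennreal_ofReal]
  refine withDensity_mono (.of_forall fun x => ?_)
  rw [Pi.mul_apply, ← ENNReal.ofReal_mul (by positivity), div_mul_eq_mul_div, ← Real.exp_add]
  exact ENNReal.ofReal_le_ofReal
    (div_le_div_of_nonneg_right (Real.exp_le_exp.2 (htangent x)) (by positivity))

theorem lintegral_exp_fderiv_tilted_neg_le_of_lipschitzWith {K : NNReal} (hV : Differentiable ℝ V)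
    (hlip : LipschitzWith K (fderiv ℝ V)) (u : E) :
    ∫⁻ x, ENNReal.ofReal (Real.exp (fderiv ℝ V x u)) ∂(μ.tilted fun x => -V x) ≤
      ENNReal.ofReal (Real.exp (K * ‖u‖ ^ 2 / 2)) := by
  set Z := ∫ x, Real.exp (-V x) ∂μ
  have hZ : 0 ≤ Z := integral_nonneg fun x => by positivity
  have hdescent (x : E) : -V x + fderiv ℝ V x u ≤ K * ‖u‖ ^ 2 / 2 + -V (x - u) := by
    have := le_add_fderiv_sub_add_sq_of_lipschitzWith hV hlip x (x - u)
    rw [sub_sub_cancel_left, map_neg, norm_neg] at this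
    linarith
  calc ∫⁻ x, ENNReal.ofReal (Real.exp (fderiv ℝ V x u)) ∂(μ.tilted fun x => -V x)
      = ∫⁻ x, ENNReal.ofReal (Real.exp (-V x + fderiv ℝ V x u) / Z) ∂μ := by
        rw [lintegral_tilted]
        refine lintegral_congr fun x => ?_
        rw [← ENNReal.ofReal_mul (by positivity), div_mul_eq_mul_div, ← Real.exp_add]
    _ ≤ ∫⁻ x, ENNReal.ofReal (Real.exp (K * ‖u‖ ^ 2 / 2)) *
          ENNReal.ofReal (Real.exp (-V (x - u)) / Z) ∂μ := by
        refine lintegral_mono fun x => ?_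
        rw [← ENNReal.ofReal_mul (by positivity), ← mul_div_assoc, ← Real.exp_add]
        exact ENNReal.ofReal_le_ofReal
          (div_le_div_of_nonneg_right (Real.exp_le_exp.2 (hdescent x)) hZ)
    _ = ENNReal.ofReal (Real.exp (K * ‖u‖ ^ 2 / 2)) * (μ.tilted fun x => -V x) Set.univ := by
        rw [lintegral_const_mul' _ _ ENNReal.ofReal_ne_top,
          lintegral_sub_right_eq_self (fun x => ENNReal.ofReal (Real.exp (-V x) / Z)),
          tilted_apply' _ _ .univ, setLIntegral_univ]
    _ ≤ ENNReal.ofReal (Real.exp (K * ‖u‖ ^ 2 / 2)) := mul_le_of_le_one_right' prob_le_one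

end Tilted

section Gaussian

open Module (finrank)

theorem lintegral_exp_neg_mul_sq_norm_add_inner {E : Type*} [NormedAddCommGroup E]
    [InnerProductSpace ℝ E] [FiniteDimensional ℝ E] [MeasurableSpace E] [BorelSpace E]
    {b : ℝ} (hb : 0 < b) (a : E) :
    ∫⁻ x : E, ENNReal.ofReal (Real.exp (-b * ‖x‖ ^ 2 + inner ℝ a x)) =
      ENNReal.ofReal ((Real.pi / b) ^ ((finrank ℝ E : ℝ) / 2) *
        Real.exp (‖a‖ ^ 2 / (4 * b))) := by
  have hb' : 0 < (b : ℂ).re := hb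
  have hint : Integrable fun x : E => Real.exp (-b * ‖x‖ ^ 2 + inner ℝ a x) := by
    refine (GaussianFourier.integrable_cexp_neg_mul_sq_norm_add hb' 1 a).re.congr
      (.of_forall fun x => ?_)
    simp [← Complex.ofReal_pow, Complex.exp_re]
  rw [← ofReal_integral_eq_lintegral_ofReal hint (.of_forall fun x => by positivity)]
  congr 1
  have := GaussianFourier.integral_cexp_neg_mul_sq_norm_add hb' 1 a
  rw [← Complex.ofReal_inj, ← integral_complex_ofReal]
  push_cast [Complex.ofReal_cpow (div_nonneg Real.pi_pos.le hb.le)]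
  simpa using this

variable {d : ℕ}

theorem gaussPdf_nonneg {t : ℝ} (ht : 0 ≤ t) (x : EuclideanSpace ℝ (Fin d)) :
    0 ≤ gaussPdf d t x := by
  unfold gaussPdf
  positivity

@[fun_prop]
theorem continuous_gaussPdf (t : ℝ) : Continuous (gaussPdf d t) := by
  unfold gaussPdf
  fun_prop

instance sFinite_gaussMeasure (t : ℝ) : SFinite (gaussMeasure d t) := by
  unfold gaussMeasure
  infer_instance

theorem lintegral_exp_sq_norm_add_inner_gaussMeasure {t b : ℝ} (ht : 0 < t) (hb : b * t < 1)
    (a : EuclideanSpace ℝ (Fin d)) :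
    ∫⁻ x, ENNReal.ofReal (Real.exp (b * ‖x‖ ^ 2 / 2 + inner ℝ a x)) ∂(gaussMeasure d t) =
      ENNReal.ofReal ((1 - b * t) ^ (-(d : ℝ) / 2) *
        Real.exp (t * ‖a‖ ^ 2 / (2 * (1 - b * t)))) := by
  have hbt : 0 < 1 - b * t := by linarith
  have hπt : 0 < 2 * Real.pi * t := by positivity
  have hc : 0 < (1 - b * t) / (2 * t) := by positivity
  have hdensity (x : EuclideanSpace ℝ (Fin d)) :
      gaussPdf d t x * Real.exp (b * ‖x‖ ^ 2 / 2 + inner ℝ a x) =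
        (2 * Real.pi * t) ^ (-(d : ℝ) / 2) *
          Real.exp (-((1 - b * t) / (2 * t)) * ‖x‖ ^ 2 + inner ℝ a x) := by
    rw [gaussPdf, mul_assoc, ← Real.exp_add]
    congr 2
    field_simp
    ring
  have hconst : (2 * Real.pi * t) ^ (-(d : ℝ) / 2) *
      (Real.pi / ((1 - b * t) / (2 * t))) ^ ((d : ℝ) / 2) = (1 - b * t) ^ (-(d : ℝ) / 2) := by
    rw [show Real.pi / ((1 - b * t) / (2 * t)) = (2 * Real.pi * t) / (1 - b * t) by field_simp,
      Real.div_rpow hπt.le hbt.le, neg_div, Real.rpow_neg hπt.le, Real.rpow_neg hbt.le]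
    field_simp
  rw [gaussMeasure, lintegral_withDensity_eq_lintegral_mul _ (by fun_prop) (by fun_prop)]
  simp only [Pi.mul_apply, ← ENNReal.ofReal_mul (gaussPdf_nonneg ht.le _), hdensity]
  simp only [ENNReal.ofReal_mul (Real.rpow_nonneg hπt.le _)]
  rw [lintegral_const_mul' _ _ ENNReal.ofReal_ne_top, lintegral_exp_neg_mul_sq_norm_add_inner hc,
    ← ENNReal.ofReal_mul (by positivity), ← mul_assoc, finrank_euclideanSpace_fin, hconst]
  congr 3
  field_simp
  ring

theorem lintegral_exp_inner_gaussMeasure {t : ℝ} (ht : 0 < t) (a : EuclideanSpace ℝ (Fin d)) :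
    ∫⁻ x, ENNReal.ofReal (Real.exp (inner ℝ a x)) ∂(gaussMeasure d t) =
      ENNReal.ofReal (Real.exp (t * ‖a‖ ^ 2 / 2)) := by
  simpa using lintegral_exp_sq_norm_add_inner_gaussMeasure (b := 0) ht (by simp) a

theorem lintegral_exp_sq_norm_gaussMeasure {t b : ℝ} (ht : 0 < t) (hb : b * t < 1) :
    ∫⁻ x, ENNReal.ofReal (Real.exp (b * ‖x‖ ^ 2 / 2)) ∂(gaussMeasure d t) =
      ENNReal.ofReal ((1 - b * t) ^ (-(d : ℝ) / 2)) := by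
  simpa using lintegral_exp_sq_norm_add_inner_gaussMeasure (d := d) ht hb 0

-- For `d ≠ 0` the formula of `gaussPdf` degenerates at `t = 0` to the density `0`.
theorem gaussMeasure_zero_le_dirac : gaussMeasure d 0 ≤ Measure.dirac 0 := by
  rcases d.eq_zero_or_pos with rfl | hd
  · simp [gaussMeasure, gaussPdf, volume_euclideanSpace_eq_dirac]
  · have hexp : -(d : ℝ) / 2 ≠ 0 := by simp [hd.ne']
    simp [gaussMeasure, gaussPdf, Real.zero_rpow hexp, Measure.zero_le]

theorem lintegral_exp_inner_gaussMeasure_le {t : ℝ} (ht : 0 ≤ t)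
    (a : EuclideanSpace ℝ (Fin d)) :
    ∫⁻ x, ENNReal.ofReal (Real.exp (inner ℝ a x)) ∂(gaussMeasure d t) ≤
      ENNReal.ofReal (Real.exp (t * ‖a‖ ^ 2 / 2)) := by
  rcases ht.eq_or_lt with rfl | ht
  · refine (lintegral_mono' gaussMeasure_zero_le_dirac le_rfl).trans ?_
    simp
  · exact (lintegral_exp_inner_gaussMeasure ht a).le

theorem lintegral_exp_sq_norm_le_of_lintegral_exp_inner_le {Ω : Type*} [MeasurableSpace Ω]
    {μ : Measure Ω} [SFinite μ] {X : Ω → EuclideanSpace ℝ (Fin d)} {L s : ℝ} (hX : Measurable X)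
    (hmgf : ∀ u, ∫⁻ ω, ENNReal.ofReal (Real.exp (inner ℝ (X ω) u)) ∂μ ≤
      ENNReal.ofReal (Real.exp (L * ‖u‖ ^ 2 / 2)))
    (hs : 0 ≤ s) (hLs : L * s < 1) :
    ∫⁻ ω, ENNReal.ofReal (Real.exp (s * ‖X ω‖ ^ 2 / 2)) ∂μ ≤
      ENNReal.ofReal ((1 - L * s) ^ (-(d : ℝ) / 2)) := by
  rcases hs.eq_or_lt with rfl | hs
  · simpa using hmgf 0
  calc ∫⁻ ω, ENNReal.ofReal (Real.exp (s * ‖X ω‖ ^ 2 / 2)) ∂μ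
      = ∫⁻ ω, ∫⁻ u, ENNReal.ofReal (Real.exp (inner ℝ (X ω) u)) ∂(gaussMeasure d s) ∂μ := by
        simp only [lintegral_exp_inner_gaussMeasure hs]
    _ = ∫⁻ u, ∫⁻ ω, ENNReal.ofReal (Real.exp (inner ℝ (X ω) u)) ∂μ ∂(gaussMeasure d s) :=
        lintegral_lintegral_swap (by fun_prop)
    _ ≤ ∫⁻ u, ENNReal.ofReal (Real.exp (L * ‖u‖ ^ 2 / 2)) ∂(gaussMeasure d s) :=
        lintegral_mono hmgf
    _ = ENNReal.ofReal ((1 - L * s) ^ (-(d : ℝ) / 2)) :=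
        lintegral_exp_sq_norm_gaussMeasure hs hLs

end Gaussian

section Gibbs

theorem measurable_gradient {E : Type*} [NormedAddCommGroup E] [InnerProductSpace ℝ E]
    [CompleteSpace E] [MeasurableSpace E] [BorelSpace E] (f : E → ℝ) : Measurable (gradient f) :=
  (InnerProductSpace.toDual ℝ E).symm.continuous.measurable.comp (measurable_fderiv ℝ f)

theorem lipschitzWith_fderiv_of_gradient {E : Type*} [NormedAddCommGroup E]
    [InnerProductSpace ℝ E] [CompleteSpace E] {f : E → ℝ} {K : NNReal}
    (hf : LipschitzWith K (gradient f)) : LipschitzWith K (fderiv ℝ f) := by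
  simpa [toDual_comp_gradient] using (InnerProductSpace.toDual ℝ E).lipschitz.comp hf

variable {d : ℕ} {V : EuclideanSpace ℝ (Fin d) → ℝ}

theorem mconv_tilted_neg_gaussMeasure_le (hV : Differentiable ℝ V)
    (hconv : ConvexOn ℝ Set.univ V) {t : ℝ} (ht : 0 ≤ t) :
    mconv (volume.tilted fun x => -V x) (gaussMeasure d t) ≤
      (volume.tilted fun x => -V x).withDensity fun x =>
        ENNReal.ofReal (Real.exp (t * ‖gradient V x‖ ^ 2 / 2)) := by
  have hgrad := measurable_gradient V
  have htranslate (y : EuclideanSpace ℝ (Fin d)) :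
      (volume.tilted fun x => -V x).map (· + y) ≤
        (volume.tilted fun x => -V x).withDensity fun x =>
          ENNReal.ofReal (Real.exp (inner ℝ (gradient V x) y)) := by
    simpa only [inner_gradient_left] using
      map_add_right_tilted_neg_le_of_convexOn volume hV hconv y
  calc mconv (volume.tilted fun x => -V x) (gaussMeasure d t)
      ≤ (volume.tilted fun x => -V x).withDensity fun x =>
          ∫⁻ y, ENNReal.ofReal (Real.exp (inner ℝ (gradient V x) y)) ∂(gaussMeasure d t) :=
        conv_le_withDensity_lintegral (by fun_prop) htranslate
    _ ≤ (volume.tilted fun x => -V x).withDensity fun x =>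
          ENNReal.ofReal (Real.exp (t * ‖gradient V x‖ ^ 2 / 2)) :=
        withDensity_mono (.of_forall fun x => lintegral_exp_inner_gaussMeasure_le ht _)

theorem lintegral_exp_sq_norm_gradient_tilted_neg_le {K : NNReal} {s : ℝ}
    (hV : Differentiable ℝ V) (hlip : LipschitzWith K (gradient V)) (hs : 0 ≤ s)
    (hKs : K * s < 1) :
    ∫⁻ x, ENNReal.ofReal (Real.exp (s * ‖gradient V x‖ ^ 2 / 2))
        ∂(volume.tilted fun x => -V x) ≤
      ENNReal.ofReal ((1 - K * s) ^ (-(d : ℝ) / 2)) := by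
  refine lintegral_exp_sq_norm_le_of_lintegral_exp_inner_le (measurable_gradient V)
    (fun u => ?_) hs hKs
  simpa only [inner_gradient_left] using lintegral_exp_fderiv_tilted_neg_le_of_lipschitzWith
    volume hV (lipschitzWith_fderiv_of_gradient hlip) u

theorem renyi_mconv_tilted_neg_gaussMeasure_le {K : NNReal} {q t : ℝ} (hV : Differentiable ℝ V)
    (hconv : ConvexOn ℝ Set.univ V) (hlip : LipschitzWith K (gradient V)) (hq : 1 < q)
    (ht : 0 ≤ t) (hKqt : K * q * t < 1) :
    renyi q (mconv (volume.tilted fun x => -V x) (gaussMeasure d t))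
        (volume.tilted fun x => -V x) ≤
      1 / (q - 1) * Real.log ((1 - K * q * t) ^ (-(d : ℝ) / 2)) := by
  have hKqt0 : 0 ≤ K * q * t := by positivity
  have hd : -(d : ℝ) / 2 ≤ 0 := by linarith [d.cast_nonneg (α := ℝ)]
  have hC : 1 ≤ (1 - K * q * t) ^ (-(d : ℝ) / 2) :=
    Real.one_le_rpow_of_pos_of_le_one_of_nonpos (by linarith) (by linarith) hd
  refine renyi_le_of_le_withDensity hq hC (mconv_tilted_neg_gaussMeasure_le hV hconv ht) ?_
  have hpow (x : EuclideanSpace ℝ (Fin d)) :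
      ENNReal.ofReal (Real.exp (t * ‖gradient V x‖ ^ 2 / 2)) ^ q =
        ENNReal.ofReal (Real.exp (q * t * ‖gradient V x‖ ^ 2 / 2)) := by
    rw [ENNReal.ofReal_rpow_of_pos (Real.exp_pos _), ← Real.exp_mul]
    congr 2
    ring
  simp only [hpow, mul_assoc (K : ℝ) q t] at hKqt ⊢
  exact lintegral_exp_sq_norm_gradient_tilted_neg_le hV hlip (by positivity) hKqt

end Gibbs

theorem renyi_after_heat_general {d : ℕ} (L : ℝ) (hL : 0 < L)
    (V : EuclideanSpace ℝ (Fin d) → ℝ) (hV : Differentiable ℝ V)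
    (hconv : ConvexOn ℝ Set.univ V)
    (hsmooth : ∀ x y, ‖gradient V x - gradient V y‖ ≤ L * ‖x - y‖)
    (Z : ℝ) (hZ : Z = ∫ x, Real.exp (-(V x)))
    (ρ : Measure (EuclideanSpace ℝ (Fin d)))
    (hρ : ρ = volume.withDensity fun x => ENNReal.ofReal (Real.exp (-(V x)) / Z))
    (q : ℝ) (hq : 1 < q) (t : ℝ) (ht : 0 ≤ t) (ht' : t < 1 / (L * q)) :
    renyi q (mconv ρ (gaussMeasure d t)) ρ
      ≤ ((d:ℝ)/(2*(q-1))) * Real.log (1/(1 - L*q*t)) := by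
  have hρ_tilted : ρ = volume.tilted fun x => -V x := by rw [hρ, hZ, Measure.tilted]
  have hLqt : L * q * t < 1 := by rwa [lt_div_iff₀' (by positivity)] at ht'
  lift L to NNReal using hL.le
  have hlip : LipschitzWith L (gradient V) :=
    .of_dist_le_mul fun x y => by simpa only [dist_eq_norm] using hsmooth x y
  calc renyi q (mconv ρ (gaussMeasure d t)) ρ
      ≤ 1 / (q - 1) * Real.log ((1 - L * q * t) ^ (-(d : ℝ) / 2)) := by
        rw [hρ_tilted]
        exact renyi_mconv_tilted_neg_gaussMeasure_le hV hconv hlip hq ht hLqt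
    _ = d / (2 * (q - 1)) * Real.log (1 / (1 - L * q * t)) := by
        rw [Real.log_rpow (by linarith), one_div (1 - L * q * t), Real.log_inv]
        field_simp

/-- For ρ ∝ exp(−V) with V convex and L-smooth, integer q ≥ 2 and
0 ≤ t < 1/(Lq), the heat-flow smoothing ρ_t = ρ ∗ N(0,tI) satisfies
R_q(ρ_t‖ρ) ≤ (d/(2(q−1))) log(1/(1 − Lqt)). -/
theorem renyi_after_heat {d : ℕ} (L : ℝ) (hL : 0 < L)
    (V : EuclideanSpace ℝ (Fin d) → ℝ) (hV : ContDiff ℝ 2 V)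
    (hconv : ConvexOn ℝ Set.univ V)
    (hsmooth : ∀ x y, ‖gradient V x - gradient V y‖ ≤ L * ‖x - y‖)
    (Z : ℝ) (hZ : Z = ∫ x, Real.exp (-(V x)))
    (ρ : Measure (EuclideanSpace ℝ (Fin d)))
    (hρ : ρ = volume.withDensity fun x => ENNReal.ofReal (Real.exp (-(V x)) / Z))
    (q : ℕ) (hq : 2 ≤ q) (t : ℝ) (ht : 0 ≤ t) (ht' : t < 1/(L*q)) :
    renyi q (mconv ρ (gaussMeasure d t)) ρ
      ≤ ((d:ℝ)/(2*((q:ℝ)-1))) * Real.log (1/(1 - L*q*t)) :=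
  renyi_after_heat_general L hL V (hV.differentiable two_ne_zero) hconv hsmooth Z hZ ρ hρ q
    (by exact_mod_cast hq) t ht ht'
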